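/- arXiv:2107.14798 — 2 statements merged into one kernel-verified Lean document; each statement's English description precedes it below -/
import Mathlib

section
/- Let n ≥ k > r ≥ 2 be integers and let L ⊆ {0,1,…,C(k,r)} be a 3-good list. Then f(n,r,k,L) ≤ 2^{2k·n^{r−1} + n^{r−1}·log₂ n}. -/
open Finset

/-- The family of all `r`-graphs on `[n]`: sets of `r`-element subsets of `Fin n`. -/
def rGraphs (n r : ℕ) : Finset (Finset (Finset (Fin n))) :=
  (Finset.univ.powersetCard r).powerset

/-- `G` is `(L,k)`-free: for every `k`-element vertex set `S`, the number of edges of `G`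
contained in `S` does not belong to `L`. -/
def IsLKFree (n k : ℕ) (L : Finset ℕ) (G : Finset (Finset (Fin n))) : Prop :=
  ∀ S : Finset (Fin n), S.card = k → (G.filter (fun e => e ⊆ S)).card ∉ L

instance (n k : ℕ) (L : Finset ℕ) : DecidablePred (IsLKFree n k L) := fun G =>
  inferInstanceAs (Decidable (∀ S : Finset (Fin n), S.card = k →
    (G.filter (fun e => e ⊆ S)).card ∉ L))

/-- `f(n,r,k,L)`: the number of `(L,k)`-free `r`-graphs on `[n]`. -/
def numFree (n r k : ℕ) (L : Finset ℕ) : ℕ :=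
  ((rGraphs n r).filter (IsLKFree n k L)).card

/-- `L` is 3-good: the complement of `L` in `{0,…,C(k,r)}` contains no 3 consecutive integers. -/
def ThreeGood (k r : ℕ) (L : Finset ℕ) : Prop :=
  ∀ i : ℕ, i + 2 ≤ Nat.choose k r → ({i, i + 1, i + 2} : Finset ℕ) ∩ L ≠ ∅

/-!
The number of members of a set family is at most the number of sets it order-shatters, so it
suffices to count the systems `H` of `r`-sets order-shattered by the family of `(L,k)`-free
`r`-graphs, the `r`-sets being ordered colexicographically. Suppose such an `H` contains
`A ∪ {x}` and `A ∪ {y}`, where `A < x < y` and at least `k - r - 1` vertices lie above `y`, and let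
`S` be the `k`-set formed by `A`, `x`, `y` and the last `k - r - 1` vertices. Apart from these two,
all `r`-subsets of `S` are colexicographically larger than both, so there are `(L,k)`-free graphs
agreeing on `S` except that they contain none, one or both of the two sets. Their edge counts in `S`
are three consecutive integers outside `L`, contradicting 3-goodness.

Hence, for every `(r-1)`-set `A`, at most one vertex `x > A` outside the last `k - r - 1` vertices
satisfies `A ∪ {x} ∈ H`. This leaves at most `(n + 1) * 2 ^ (k - r - 1)` possibilities for the set
of all `x > A` with `A ∪ {x} ∈ H`, and `H` is determined by these sets.
-/

section OrderShattering

variable {α β : Type*}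

/-- `OrderShatters f 𝒜 s`: the family `𝒜` *order-shatters* `s` in the sense of Anstee, Rónyai and
Sali. It shatters `s` by sets `G t ∈ 𝒜`, one for each `t ⊆ s`, forming a decision tree: whether
`x ∈ G t` depends only on the part of `t` at or above `x`. The elements are ordered by their
`f`-values, and `t` ranges over all finsets, only `s ∩ t` being relevant. -/
def OrderShatters [LE β] (f : α → β) (𝒜 : Finset (Finset α)) (s : Finset α) : Prop :=
  ∃ G : Finset α → Finset α,
    (∀ t, G t ∈ 𝒜 ∧ ∀ y ∈ s, y ∈ G t ↔ y ∈ t) ∧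
      ∀ t u x, (∀ y ∈ s, f x ≤ f y → (y ∈ t ↔ y ∈ u)) → (x ∈ G t ↔ x ∈ G u)

namespace OrderShatters

section LE

variable [LE β] {f : α → β} {𝒜 ℬ : Finset (Finset α)} {s : Finset α} {a : α}

lemma empty (h𝒜 : 𝒜.Nonempty) : OrderShatters f 𝒜 ∅ := by
  obtain ⟨G, hG⟩ := h𝒜
  exact ⟨fun _ ↦ G, by simp [hG], by simp⟩

lemma mono (h𝒜ℬ : 𝒜 ⊆ ℬ) (h : OrderShatters f 𝒜 s) : OrderShatters f ℬ s := by
  obtain ⟨G, hG, htree⟩ := h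
  exact ⟨G, fun t ↦ ⟨h𝒜ℬ (hG t).1, (hG t).2⟩, htree⟩

lemma exists_superset (h : OrderShatters f 𝒜 s) : ∃ G ∈ 𝒜, s ⊆ G := by
  obtain ⟨G, hG, -⟩ := h
  exact ⟨G s, (hG s).1, fun y hy ↦ ((hG s).2 y hy).2 hy⟩

variable [DecidableEq α]

lemma of_memberSubfamily (ha : a ∉ s) (h : OrderShatters f (𝒜.memberSubfamily a) s) :
    OrderShatters f 𝒜 s := by
  obtain ⟨G, hG, htree⟩ := h
  refine ⟨fun t ↦ insert a (G t), fun t ↦ ⟨(mem_memberSubfamily.1 (hG t).1).1, fun y hy ↦ ?_⟩,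
    fun t u x htu ↦ ?_⟩
  · rw [mem_insert, or_iff_right (ne_of_mem_of_not_mem hy ha), (hG t).2 y hy]
  · rw [mem_insert, mem_insert, htree t u x htu]

protected lemma insert (ha : ∀ G ∈ 𝒜, ∀ x ∈ G, f x ≤ f a)
    (h₀ : OrderShatters f (𝒜.nonMemberSubfamily a) s)
    (h₁ : OrderShatters f (𝒜.memberSubfamily a) s) : OrderShatters f 𝒜 (insert a s) := by
  obtain ⟨G₀, hG₀, htree₀⟩ := h₀
  obtain ⟨G₁, hG₁, htree₁⟩ := h₁
  simp only [mem_nonMemberSubfamily, mem_memberSubfamily] at hG₀ hG₁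
  let G (t : Finset α) : Finset α := if a ∈ t then insert a (G₁ t) else G₀ t
  have hG_mem {t : Finset α} (hat : a ∈ t) : G t = insert a (G₁ t) := if_pos hat
  have hG_notMem {t : Finset α} (hat : a ∉ t) : G t = G₀ t := if_neg hat
  have hG (t : Finset α) : G t ∈ 𝒜 ∧ ∀ y ∈ insert a s, y ∈ G t ↔ y ∈ t := by
    by_cases hat : a ∈ t
    · rw [hG_mem hat]
      grind
    · rw [hG_notMem hat]
      grind
  refine ⟨G, hG, fun t u x htu ↦ ?_⟩
  by_cases hxa : f x ≤ f a
  · have hatu : a ∈ t ↔ a ∈ u := htu a (mem_insert_self a s) hxa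
    have htu' : ∀ y ∈ s, f x ≤ f y → (y ∈ t ↔ y ∈ u) := fun y hy ↦ htu y (mem_insert_of_mem hy)
    by_cases hat : a ∈ t
    · rw [hG_mem hat, hG_mem (hatu.1 hat), mem_insert, mem_insert, htree₁ t u x htu']
    · rw [hG_notMem hat, hG_notMem (mt hatu.2 hat), htree₀ t u x htu']
  · exact iff_of_false (fun hx ↦ hxa (ha _ (hG t).1 x hx)) (fun hx ↦ hxa (ha _ (hG u).1 x hx))

end LE

section Preorder

variable [Preorder β] [DecidableEq α] {f : α → β} {𝒜 : Finset (Finset α)} {s d w : Finset α}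

lemma exists_inter_eq_union (h : OrderShatters f 𝒜 s) (hds : d ⊆ s) (hdw : d ⊆ w)
    (hlt : ∀ x ∈ d, ∀ y ∈ w \ d, f x < f y) :
    ∃ c, Disjoint c d ∧ ∀ t ⊆ d, ∃ G ∈ 𝒜, G ∩ w = c ∪ t := by
  obtain ⟨G, hG, htree⟩ := h
  refine ⟨G ∅ ∩ w, ?_, fun t htd ↦ ⟨G t, (hG t).1, ?_⟩⟩
  · exact disjoint_left.2 fun y hy hyd ↦ notMem_empty y <|
      ((hG ∅).2 y (hds hyd)).1 (mem_of_mem_inter_left hy)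
  · have hmem_d : ∀ y ∈ d, (y ∈ G t ↔ y ∈ t) ∧ y ∉ G ∅ := fun y hy ↦
      ⟨(hG t).2 y (hds hy), fun hy' ↦ notMem_empty y <| ((hG ∅).2 y (hds hy)).1 hy'⟩
    have hmem_sdiff : ∀ y ∈ w \ d, y ∈ G t ↔ y ∈ G ∅ := fun y hy ↦
      htree t ∅ y fun x _ hyx ↦ iff_of_false (fun hxt ↦ (hlt x (htd hxt) y hy).not_ge hyx)
        (notMem_empty x)
    ext y
    grind

lemma exists_card_inter_eq_add (h : OrderShatters f 𝒜 s) (hds : d ⊆ s) (hdw : d ⊆ w)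
    (hlt : ∀ x ∈ d, ∀ y ∈ w \ d, f x < f y) :
    ∃ c, ∀ j ≤ #d, ∃ G ∈ 𝒜, #(G ∩ w) = c + j := by
  obtain ⟨c, hcd, hc⟩ := h.exists_inter_eq_union hds hdw hlt
  refine ⟨#c, fun j hj ↦ ?_⟩
  obtain ⟨t, htd, rfl⟩ := exists_subset_card_eq hj
  obtain ⟨G, hG, hGw⟩ := hc t htd
  exact ⟨G, hG, by rw [hGw, card_union_of_disjoint (hcd.mono_right htd)]⟩

end Preorder

end OrderShatters

section LinearOrder

variable [LinearOrder β]

open scoped Classical in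
lemma card_orderShatters_subfamilies_le {f : α → β} {𝒜 : Finset (Finset α)} {s : Finset α} {a : α}
    (has : a ∉ s) (hmax : ∀ G ∈ 𝒜, ∀ x ∈ G, f x ≤ f a) :
    #{t ∈ s.powerset | OrderShatters f (𝒜.memberSubfamily a) t} +
      #{t ∈ s.powerset | OrderShatters f (𝒜.nonMemberSubfamily a) t} ≤
      #{t ∈ (insert a s).powerset | OrderShatters f 𝒜 t} := by
  set 𝒮₁ : Finset (Finset α) := {t ∈ s.powerset | OrderShatters f (𝒜.memberSubfamily a) t}
  set 𝒮₀ : Finset (Finset α) := {t ∈ s.powerset | OrderShatters f (𝒜.nonMemberSubfamily a) t}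
  set 𝒮 : Finset (Finset α) := {t ∈ (insert a s).powerset | OrderShatters f 𝒜 t} with h𝒮
  have mem_nonMember {t : Finset α} (hts : t ⊆ s) (ht : OrderShatters f 𝒜 t) :
      t ∈ 𝒮.nonMemberSubfamily a := by
    simp [h𝒮, mem_nonMemberSubfamily, ht, notMem_mono hts has, hts.trans (subset_insert a s)]
  have hunion : 𝒮₁ ∪ 𝒮₀ ⊆ 𝒮.nonMemberSubfamily a := by
    refine union_subset (fun t ht ↦ ?_) (fun t ht ↦ ?_)
    · obtain ⟨hts, ht⟩ := mem_filter.1 ht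
      have hts : t ⊆ s := mem_powerset.1 hts
      exact mem_nonMember hts (ht.of_memberSubfamily (notMem_mono hts has))
    · obtain ⟨hts, ht⟩ := mem_filter.1 ht
      exact mem_nonMember (mem_powerset.1 hts) (ht.mono (filter_subset _ _))
  have hinter : 𝒮₁ ∩ 𝒮₀ ⊆ 𝒮.memberSubfamily a := fun t ht ↦ by
    obtain ⟨ht₁, ht₀⟩ := mem_inter.1 ht
    obtain ⟨hts, ht₀⟩ := mem_filter.1 ht₀
    have hts : t ⊆ s := mem_powerset.1 hts
    have ht𝒜 : OrderShatters f 𝒜 (insert a t) := ht₀.insert hmax (mem_filter.1 ht₁).2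
    simp [h𝒮, mem_memberSubfamily, ht𝒜, notMem_mono hts has, insert_subset_insert a hts]
  calc #𝒮₁ + #𝒮₀ = #(𝒮₁ ∩ 𝒮₀) + #(𝒮₁ ∪ 𝒮₀) := (card_inter_add_card_union _ _).symm
    _ ≤ #(𝒮.memberSubfamily a) + #(𝒮.nonMemberSubfamily a) :=
      add_le_add (card_le_card hinter) (card_le_card hunion)
    _ = #𝒮 := card_memberSubfamily_add_card_nonMemberSubfamily a 𝒮

open scoped Classical in
lemma card_le_card_orderShatters_of_subset_powerset {f : α → β} {s : Finset α}
    {𝒜 : Finset (Finset α)} (h𝒜 : 𝒜 ⊆ s.powerset) :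
    #𝒜 ≤ #{t ∈ s.powerset | OrderShatters f 𝒜 t} := by
  induction s using induction_on_max_value f generalizing 𝒜 with
  | empty =>
    obtain rfl | h := 𝒜.eq_empty_or_nonempty
    · simp
    · refine card_le_card fun t ht ↦ ?_
      obtain rfl : t = ∅ := by simpa using h𝒜 ht
      simpa using OrderShatters.empty h
  | insert a s has hmax ih =>
    have hmem : 𝒜.memberSubfamily a ⊆ s.powerset := fun t ht ↦ by
      obtain ⟨ht, hat⟩ := mem_memberSubfamily.1 ht
      exact mem_powerset.2 ((insert_subset_insert_iff hat).1 (mem_powerset.1 (h𝒜 ht)))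
    have hnonMem : 𝒜.nonMemberSubfamily a ⊆ s.powerset := fun t ht ↦ by
      obtain ⟨ht, hat⟩ := mem_nonMemberSubfamily.1 ht
      exact mem_powerset.2 ((subset_insert_iff_of_notMem hat).1 (mem_powerset.1 (h𝒜 ht)))
    have hmax' : ∀ G ∈ 𝒜, ∀ x ∈ G, f x ≤ f a := fun G hG x hx ↦ by
      obtain rfl | hxs := mem_insert.1 (mem_powerset.1 (h𝒜 hG) hx)
      exacts [le_rfl, hmax x hxs]
    rw [← card_memberSubfamily_add_card_nonMemberSubfamily a 𝒜]
    exact (add_le_add (ih hmem) (ih hnonMem)).trans (card_orderShatters_subfamilies_le has hmax')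

open scoped Classical in
lemma card_le_card_orderShatters [Fintype α] (f : α → β) (𝒜 : Finset (Finset α)) :
    #𝒜 ≤ #{t | OrderShatters f 𝒜 t} := by
  simpa using card_le_card_orderShatters_of_subset_powerset (f := f) (𝒜 := 𝒜) (s := univ) (by simp)

end LinearOrder

end OrderShattering

section UpperLink

variable {V : Type*} [LinearOrder V] [Fintype V]

/-- The upper link of `A` in the set system `H`: the vertices lying above all of `A` whose addition
to `A` yields an edge of `H`. A nonempty edge `e` is recorded in the upper link of `e` minus its
maximum. -/
def upperLink (H : Finset (Finset V)) (A : Finset V) : Finset V :=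
  {x | (∀ a ∈ A, a < x) ∧ insert x A ∈ H}

lemma mem_upperLink {H : Finset (Finset V)} {A : Finset V} {x : V} :
    x ∈ upperLink H A ↔ (∀ a ∈ A, a < x) ∧ insert x A ∈ H := by
  simp [upperLink]

lemma max'_mem_upperLink_erase {H : Finset (Finset V)} {e : Finset V} (he : e.Nonempty) :
    e.max' he ∈ upperLink H (e.erase (e.max' he)) ↔ e ∈ H := by
  rw [mem_upperLink, insert_erase (e.max'_mem he), and_iff_right]
  exact fun a ha ↦ e.lt_max'_of_mem_erase_max' he ha

lemma subset_of_forall_upperLink_subset {s : ℕ} {H H' : Finset (Finset V)}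
    (hH : ∀ e ∈ H, #e = s + 1) (hlink : ∀ A, #A = s → upperLink H A ⊆ upperLink H' A) :
    H ⊆ H' := fun e he ↦ by
  have hne : e.Nonempty := card_pos.1 (by simp [hH e he])
  have hcard : #(e.erase (e.max' hne)) = s := by
    rw [card_erase_of_mem (e.max'_mem hne), hH e he, Nat.add_sub_cancel]
  rw [← max'_mem_upperLink_erase hne] at he ⊢
  exact hlink _ hcard he

lemma card_le_pow_of_upperLink_mem {s : ℕ} {𝒬 : Finset (Finset (Finset V))}
    {𝒳 : Finset (Finset V)} (h𝒬 : ∀ H ∈ 𝒬, ∀ e ∈ H, #e = s + 1)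
    (h𝒳 : ∀ H ∈ 𝒬, ∀ A, #A = s → upperLink H A ∈ 𝒳) :
    #𝒬 ≤ #𝒳 ^ (Fintype.card V).choose s := by
  let P : Finset (Finset V) := univ.powersetCard s
  have hP (A : P) : #A.1 = s := (mem_powersetCard.1 A.2).2
  calc #𝒬 ≤ #(Fintype.piFinset fun _ : P ↦ 𝒳) := by
        refine card_le_card_of_injOn (fun H A ↦ upperLink H A.1)
          (fun H hH ↦ Fintype.mem_piFinset.2 fun A ↦ h𝒳 H hH A (hP A)) ?_
        intro H hH H' hH' heq
        have hlink (A : Finset V) (hA : #A = s) : upperLink H A = upperLink H' A :=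
          congrFun heq ⟨A, mem_powersetCard.2 ⟨subset_univ A, hA⟩⟩
        exact (subset_of_forall_upperLink_subset (h𝒬 H hH) fun A hA ↦ (hlink A hA).subset).antisymm
          (subset_of_forall_upperLink_subset (h𝒬 H' hH') fun A hA ↦ (hlink A hA).superset)
    _ = #𝒳 ^ (Fintype.card V).choose s := by simp [P]

end UpperLink

lemma card_filter_card_sdiff_le_one_le {α : Type*} [Fintype α] [DecidableEq α] (B : Finset α) :
    #{X : Finset α | #(X \ B) ≤ 1} ≤ (Fintype.card α + 1) * 2 ^ #B := by
  have hsub : ({X | #(X \ B) ≤ 1} : Finset (Finset α)) ⊆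
      ((univ : Finset (Option α)) ×ˢ B.powerset).image fun p ↦ p.1.toFinset ∪ p.2 := fun X hX ↦ by
    obtain ⟨o, ho⟩ : ∃ o : Option α, o.toFinset = X \ B := by
      obtain h | h := Nat.le_one_iff_eq_zero_or_eq_one.1 (mem_filter.1 hX).2
      · exact ⟨none, (card_eq_zero.1 h).symm⟩
      · obtain ⟨v, hv⟩ := card_eq_one.1 h
        exact ⟨some v, hv.symm⟩
    refine mem_image.2 ⟨(o, X ∩ B), by simp, ?_⟩
    rw [ho, sdiff_union_inter]
  calc #{X : Finset α | #(X \ B) ≤ 1} ≤ #((univ : Finset (Option α)) ×ˢ B.powerset) :=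
        (card_le_card hsub).trans card_image_le
    _ = (Fintype.card α + 1) * 2 ^ #B := by
        rw [card_product, card_univ, Fintype.card_option, card_powerset]

section Colex

variable {V : Type*} [LinearOrder V] {A B e : Finset V} {x y : V}

lemma toColex_insert_lt_toColex (hAx : ∀ a ∈ A, a < x) (hxy : x < y) (hyB : ∀ b ∈ B, y < b)
    (he : #e = #A + 1) (hsub : e ⊆ insert x (insert y A) ∪ B)
    (hex : e ≠ insert x A) (hey : e ≠ insert y A) : toColex (insert y A) < toColex e := by
  have exists_notMem (v : V) (hev : e ≠ insert v A) : ∃ b ∈ e, b ∉ insert v A := by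
    by_contra! h
    exact hev (eq_of_subset_of_card_le h ((card_insert_le v A).trans he.ge))
  refine Colex.toColex_lt_toColex.2 ⟨hey.symm, fun a ha hae ↦ ?_⟩
  obtain rfl | ha := mem_insert.1 ha
  · obtain ⟨b, hbe, hbx⟩ := exists_notMem x hex
    have hbB : b ∈ B := by grind
    exact ⟨b, hbe, by grind, (hyB b hbB).le⟩
  · obtain ⟨b, hbe, hby⟩ := exists_notMem y hey
    refine ⟨b, hbe, hby, ?_⟩
    obtain rfl | hbB : b = x ∨ b ∈ B := by grind
    exacts [(hAx a ha).le, ((hAx a ha).trans (hxy.trans (hyB b hbB))).le]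

lemma card_insert_insert_union (hAx : ∀ a ∈ A, a < x) (hxy : x < y) (hyB : ∀ b ∈ B, y < b) :
    #(insert x (insert y A) ∪ B) = #A + 2 + #B := by
  have hdisj : Disjoint (insert x (insert y A)) B := disjoint_left.2 fun z hz hzB ↦ by
    have := hyB z hzB
    grind
  rw [card_union_of_disjoint hdisj, card_insert_of_notMem (by grind),
    card_insert_of_notMem (by grind)]

lemma OrderShatters.exists_card_filter_subset_eq_add {𝒜 : Finset (Finset (Finset V))}
    {H : Finset (Finset V)} (hH : OrderShatters toColex 𝒜 H)
    (h𝒜 : ∀ G ∈ 𝒜, ∀ e ∈ G, #e = #A + 1) (hAx : ∀ a ∈ A, a < x) (hxy : x < y)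
    (hyB : ∀ b ∈ B, y < b) (hxH : insert x A ∈ H) (hyH : insert y A ∈ H) :
    ∃ c, ∀ j ≤ 2, ∃ G ∈ 𝒜, #{e ∈ G | e ⊆ insert x (insert y A) ∪ B} = c + j := by
  have hxA : x ∉ A := fun h ↦ lt_irrefl x (hAx x h)
  have hyA : y ∉ A := fun h ↦ hxy.not_gt (hAx y h)
  have hlt : toColex (insert x A) < toColex (insert y A) := (Colex.insert_lt_insert hxA hyA).2 hxy
  have hne : insert x A ≠ insert y A := fun h ↦ hlt.ne (congrArg toColex h)
  have hxS : insert x A ⊆ insert x (insert y A) ∪ B := by grind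
  have hyS : insert y A ⊆ insert x (insert y A) ∪ B := by grind
  set S := insert x (insert y A) ∪ B
  have hpair : {insert x A, insert y A} ⊆ S.powersetCard (#A + 1) := by
    simp [insert_subset_iff, mem_powersetCard, hxA, hyA, hxS, hyS]
  have hpair_lt : ∀ d ∈ ({insert x A, insert y A} : Finset (Finset V)),
      ∀ e ∈ S.powersetCard (#A + 1) \ {insert x A, insert y A}, toColex d < toColex e := by
    intro d hd e he
    simp only [mem_sdiff, mem_powersetCard, mem_insert, mem_singleton, not_or] at hd he
    obtain ⟨⟨heS, hcard⟩, hex, hey⟩ := he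
    have hye := toColex_insert_lt_toColex hAx hxy hyB hcard heS hex hey
    obtain rfl | rfl := hd
    exacts [hlt.trans hye, hye]
  obtain ⟨c, hc⟩ := hH.exists_card_inter_eq_add (by simp [insert_subset_iff, hxH, hyH]) hpair
    hpair_lt
  refine ⟨c, fun j hj ↦ ?_⟩
  obtain ⟨G, hG, hcard⟩ := hc j (by rwa [card_pair hne])
  refine ⟨G, hG, hcard ▸ congrArg card ?_⟩
  ext e
  have := h𝒜 G hG e
  grind

end Colex

/-- The last `t` vertices of `[n]`, or all of them if `n < t`. They complete `A ∪ {x, y}` to a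
`k`-set without disturbing the colexicographic comparison of edges. The condition is additive to
avoid truncated subtraction. -/
def topVertices (n t : ℕ) : Finset (Fin n) :=
  {v | n ≤ v + t}

lemma card_topVertices (n t : ℕ) : #(topVertices n t) = min n t := by
  have h : topVertices n t = ({v | v < n - t} : Finset (Fin n))ᶜ := by
    ext v
    simp only [topVertices, mem_filter_univ, mem_compl]
    omega
  rw [h, card_compl, Fintype.card_fin, Fin.card_filter_val_lt]
  omega

lemma ThreeGood.exists_add_mem {k r c : ℕ} {L : Finset ℕ} (hL : ThreeGood k r L)
    (hc : c + 2 ≤ k.choose r) : ∃ j ≤ 2, c + j ∈ L := by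
  obtain ⟨i, hi⟩ := nonempty_iff_ne_empty.2 (hL c hc)
  obtain ⟨hi, hiL⟩ := mem_inter.1 hi
  exact ⟨i - c, by grind, by grind⟩

section Free

variable {n r k : ℕ} {L : Finset ℕ} {𝒜 : Finset (Finset (Finset (Fin n)))}
  {H : Finset (Finset (Fin n))} {A B : Finset (Fin n)} {x y : Fin n}

lemma card_of_mem_rGraphs {G : Finset (Finset (Fin n))} (hG : G ∈ rGraphs n r)
    {e : Finset (Fin n)} (he : e ∈ G) : #e = r :=
  (mem_powersetCard.1 (mem_powerset.1 hG he)).2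

lemma OrderShatters.insert_notMem_of_isLKFree (hH : OrderShatters toColex 𝒜 H)
    (h𝒜 : ∀ G ∈ 𝒜, G ∈ rGraphs n (#A + 1) ∧ IsLKFree n (#A + 2 + #B) L G)
    (hL : ThreeGood (#A + 2 + #B) (#A + 1) L) (hAx : ∀ a ∈ A, a < x) (hxy : x < y)
    (hyB : ∀ b ∈ B, y < b) (hxH : insert x A ∈ H) : insert y A ∉ H := fun hyH ↦ by
  have huniform : ∀ G ∈ 𝒜, ∀ e ∈ G, #e = #A + 1 := fun G hG _ he ↦
    card_of_mem_rGraphs (h𝒜 G hG).1 he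
  have hcard := card_insert_insert_union hAx hxy hyB
  set S := insert x (insert y A) ∪ B
  obtain ⟨c, hc⟩ := hH.exists_card_filter_subset_eq_add huniform hAx hxy hyB hxH hyH
  have hchoose : c + 2 ≤ (#A + 2 + #B).choose (#A + 1) := by
    obtain ⟨G, hG, hGS⟩ := hc 2 le_rfl
    rw [← hGS, ← hcard, ← card_powersetCard]
    exact card_le_card fun e he ↦ mem_powersetCard.2
      ⟨(mem_filter.1 he).2, huniform G hG e (mem_filter.1 he).1⟩
  obtain ⟨j, hj, hjL⟩ := hL.exists_add_mem hchoose
  obtain ⟨G, hG, hGS⟩ := hc j hj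
  exact (h𝒜 G hG).2 S hcard (hGS ▸ hjL)

lemma OrderShatters.card_upperLink_sdiff_topVertices_le_one {t : ℕ}
    (hH : OrderShatters toColex 𝒜 H)
    (h𝒜 : ∀ G ∈ 𝒜, G ∈ rGraphs n (#A + 1) ∧ IsLKFree n (#A + 2 + t) L G)
    (hL : ThreeGood (#A + 2 + t) (#A + 1) L) : #(upperLink H A \ topVertices n t) ≤ 1 := by
  have not_lt : ∀ x ∈ upperLink H A \ topVertices n t, ∀ y ∈ upperLink H A \ topVertices n t,
      ¬ x < y := by
    simp only [mem_sdiff, mem_upperLink, topVertices, mem_filter_univ]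
    rintro x ⟨⟨hAx, hxH⟩, -⟩ y ⟨⟨-, hyH⟩, hyn⟩ hxy
    have ht : #(topVertices n t) = t := by
      rw [card_topVertices]
      omega
    have hyt : ∀ b ∈ topVertices n t, y < b := fun b hb ↦ by
      have := (mem_filter_univ b).1 hb
      omega
    rw [← ht] at h𝒜 hL
    exact hH.insert_notMem_of_isLKFree h𝒜 hL hAx hxy hyt hxH hyH
  exact card_le_one.2 fun x hx y hy ↦
    le_antisymm (le_of_not_gt (not_lt y hy x hx)) (le_of_not_gt (not_lt x hx y hy))

end Free

theorem mainCounting_general (n r k : ℕ) (hr : 0 < r) (hk : r < k) (L : Finset ℕ)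
    (hgood : ThreeGood k r L) :
    numFree n r k L ≤ ((n + 1) * 2 ^ (k - r - 1)) ^ n.choose (r - 1) := by
  classical
  obtain ⟨s, rfl⟩ := Nat.exists_eq_add_of_le' hr
  obtain ⟨t, rfl⟩ : ∃ t, k = s + 2 + t := Nat.exists_eq_add_of_le hk
  have ht : s + 2 + t - (s + 1) - 1 = t := by omega
  let 𝒜 := {G ∈ rGraphs n (s + 1) | IsLKFree n (s + 2 + t) L G}
  let 𝒬 : Finset (Finset (Finset (Fin n))) := {H | OrderShatters toColex 𝒜 H}
  let 𝒳 : Finset (Finset (Fin n)) := {X | #(X \ topVertices n t) ≤ 1}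
  have huniform : ∀ H ∈ 𝒬, ∀ e ∈ H, #e = s + 1 := fun H hH e he ↦ by
    obtain ⟨G, hG, hHG⟩ := ((mem_filter_univ H).1 hH).exists_superset
    exact card_of_mem_rGraphs (mem_filter.1 hG).1 (hHG he)
  have hlink : ∀ H ∈ 𝒬, ∀ A, #A = s → upperLink H A ∈ 𝒳 := by
    rintro H hH A rfl
    have hH : OrderShatters toColex 𝒜 H := (mem_filter_univ H).1 hH
    exact (mem_filter_univ _).2 <|
      hH.card_upperLink_sdiff_topVertices_le_one (fun G hG ↦ mem_filter.1 hG) hgood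
  calc numFree n (s + 1) (s + 2 + t) L ≤ #𝒬 := card_le_card_orderShatters toColex 𝒜
    _ ≤ #𝒳 ^ n.choose s := by simpa using card_le_pow_of_upperLink_mem huniform hlink
    _ ≤ ((n + 1) * 2 ^ t) ^ n.choose s := by
      gcongr
      refine (card_filter_card_sdiff_le_one_le _).trans ?_
      rw [Fintype.card_fin, card_topVertices]
      gcongr
      exacts [one_le_two, min_le_right n t]
    _ = _ := by rw [ht, Nat.add_sub_cancel]

lemma two_rpow_add_mul_logb {x : ℝ} (hx : 0 < x) (a m : ℕ) :
    (2 : ℝ) ^ (a * m + m * Real.logb 2 x) = (2 ^ a * x) ^ m := by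
  rw [show (a * m + m * Real.logb 2 x : ℝ) = (a + Real.logb 2 x) * m by ring,
    Real.rpow_mul zero_le_two, Real.rpow_natCast, Real.rpow_add zero_lt_two, Real.rpow_natCast,
    Real.rpow_logb zero_lt_two (by norm_num) hx]

lemma pow_choose_le_two_rpow {n t a : ℕ} (hn : 0 < n) (hta : t < a) (m : ℕ) :
    ((((n + 1) * 2 ^ t) ^ n.choose m : ℕ) : ℝ) ≤
      2 ^ (a * (n : ℝ) ^ m + (n : ℝ) ^ m * Real.logb 2 n) := by
  have hbase : (n + 1) * 2 ^ t ≤ 2 ^ a * n := calc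
    (n + 1) * 2 ^ t ≤ 2 * n * 2 ^ t := by gcongr; omega
    _ = 2 ^ (t + 1) * n := by ring
    _ ≤ 2 ^ a * n := by gcongr; exacts [one_le_two, hta]
  have hpow : ((n + 1) * 2 ^ t) ^ n.choose m ≤ (2 ^ a * n) ^ n ^ m := calc
    ((n + 1) * 2 ^ t) ^ n.choose m ≤ (2 ^ a * n) ^ n.choose m := by gcongr
    _ ≤ (2 ^ a * n) ^ n ^ m := Nat.pow_le_pow_right (by positivity) (Nat.choose_le_pow n m)
  calc ((((n + 1) * 2 ^ t) ^ n.choose m : ℕ) : ℝ) ≤ (2 ^ a * n) ^ n ^ m := mod_cast hpow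
    _ = 2 ^ (a * (n : ℝ) ^ m + (n : ℝ) ^ m * Real.logb 2 n) := by
      simpa using (two_rpow_add_mul_logb (Nat.cast_pos.2 hn) a (n ^ m)).symm

/-- Theorem (main counting): for `n ≥ k > r ≥ 2` and a 3-good list
`L ⊆ {0,1,…,C(k,r)}`, we have `f(n,r,k,L) ≤ 2^(2k·n^(r-1) + n^(r-1)·log₂ n)`. -/
theorem mainCounting (n r k : ℕ) (hr : 2 ≤ r) (hk : r < k) (hn : k ≤ n)
    (L : Finset ℕ) (hL : L ⊆ Finset.range (Nat.choose k r + 1))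
    (hgood : ThreeGood k r L) :
    (numFree n r k L : ℝ) ≤
      (2 : ℝ) ^ (2 * (k : ℝ) * (n : ℝ) ^ (r - 1) + (n : ℝ) ^ (r - 1) * Real.logb 2 n) := by
  have hbound := pow_choose_le_two_rpow (n := n) (t := k - r - 1) (a := 2 * k) (by omega) (by omega)
  exact (Nat.cast_le.2 (mainCounting_general n r k (by omega) hk L hgood)).trans
    (mod_cast hbound (r - 1))
end

section
/- There exist real constants c > 0, C > 0 and a natural number n₀ such that for all n ≥ n₀: 2^{c·n²·log₂ n} ≤ f(n,3,4,{1,4}) ≤ 2^{C·n²·log₂ n}. (A 3-graph is ({1,4},4)-free exactly when it is induced {K₄³, E₁}-free, i.e., no 4 vertices span exactly 1 or exactly 4 edges.) -/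
open Finset

/-!
Upper bound: add the vertices one at a time. Once the triples on the old vertices are fixed, a
triangle of old vertices has two sides whose status in the link of the new vertex `v` can be
prescribed so as to force that of the third: if the triangle is an edge, then one or two of its
sides lie in the link; if not, then the number of sides in the link is not one. By induction along
a path, a set of pairs shattered by the possible links contains no cycle, so it has fewer than `n`
elements, and the Sauer–Shelah lemma leaves only `n ^ O(n)` links for each vertex.

Lower bound: colour the vertices with three colours and take the rainbow triples together with the
triples having two vertices of one colour and the third of the next. A four-set then spans `0`, `2`
or `3` triples, and exactly `3` if one of them is rainbow, so deleting a rainbow triple leaves `2`.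
Hence any set of rainbow triples meeting pairwise in at most one vertex may be deleted. Proper
colourings of the `k × k` rook's graph encode such sets, as row–column–symbol triples, and the
greedy algorithm with `3 * k` colours produces at least `k ^ (k ^ 2)` of them.
-/

theorem card_le_pow_vcDim {α : Type*} [Fintype α] [DecidableEq α] (𝒜 : Finset (Finset α)) :
    #𝒜 ≤ (Fintype.card α + 1) ^ 𝒜.vcDim := by
  set N := Fintype.card α
  set d := 𝒜.vcDim
  calc #𝒜 ≤ ∑ k ∈ Iic d, N.choose k :=
        (card_le_card_shatterer 𝒜).trans card_shatterer_le_sum_vcDim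
    _ = ∑ k ∈ range (d + 1), N.choose k := by rw [Nat.range_succ_eq_Iic]
    _ ≤ ∑ k ∈ range (d + 1), N ^ k * 1 ^ (d - k) * d.choose k := by
        refine sum_le_sum fun k hk => ?_
        rw [one_pow, mul_one]
        exact (Nat.choose_le_pow N k).trans
          (Nat.le_mul_of_pos_right _ (Nat.choose_pos (mem_range_succ_iff.1 hk)))
    _ = (N + 1) ^ d := (add_pow N 1 d).symm

section ForcedEdges

variable {V : Type*}

/-- A family of graphs, given by their edge sets, in which two sides `xy` and `yz` of a triangle can
be prescribed so as to force the third side `xz` to be present, and also so as to force it to be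
absent. -/
def ForcesThirdEdge (𝒜 : Finset (Finset (Sym2 V))) : Prop :=
  ∀ ⦃x y z : V⦄, x ≠ y → x ≠ z → y ≠ z → ∀ β : Prop, ∃ p q : Prop, ∀ u ∈ 𝒜,
    (s(x, y) ∈ u ↔ p) → (s(y, z) ∈ u ↔ q) → (s(x, z) ∈ u ↔ β)

theorem ForcesThirdEdge.exists_forced_of_isPath {𝒜 : Finset (Finset (Sym2 V))}
    (h𝒜 : ForcesThirdEdge 𝒜) {G : SimpleGraph V} {x z : V} (w : G.Walk x z) (hw : w.IsPath)
    (hxz : x ≠ z) (β : Prop) :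
    ∃ φ : Sym2 V → Prop, ∀ u ∈ 𝒜, (∀ e ∈ w.edges, (e ∈ u ↔ φ e)) → (s(x, z) ∈ u ↔ β) := by
  classical
  induction w generalizing β with
  | nil => exact absurd rfl hxz
  | @cons x y z hxy w ih =>
    obtain rfl | hyz := eq_or_ne y z
    · exact ⟨fun _ => β, fun u _ hφ => hφ _ (by simp)⟩
    obtain ⟨hw, hxw⟩ := (SimpleGraph.Walk.cons_isPath_iff _ _).1 hw
    obtain ⟨p, q, hpq⟩ := h𝒜 hxy.ne hxz hyz β
    obtain ⟨φ, hφ⟩ := ih hw hyz q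
    refine ⟨Function.update φ s(x, y) p, fun u hu hupd => hpq u hu ?_ (hφ u hu fun e he => ?_)⟩
    · simpa using hupd s(x, y) (by simp)
    · have hne : e ≠ s(x, y) := by
        rintro rfl
        exact hxw (SimpleGraph.Walk.fst_mem_support_of_mem_edges _ he)
      simpa [hne] using hupd e (by simp [he])

theorem ForcesThirdEdge.isAcyclic_of_shatters [DecidableEq V] {𝒜 : Finset (Finset (Sym2 V))}
    (h𝒜 : ForcesThirdEdge 𝒜) {s : Finset (Sym2 V)} (hs : 𝒜.Shatters s) :
    (SimpleGraph.fromEdgeSet (s : Set (Sym2 V))).IsAcyclic := by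
  classical
  simp only [SimpleGraph.isAcyclic_iff_forall_adj_isBridge,
    SimpleGraph.isBridge_iff_forall_walk_mem_edges]
  intro x z hxz w
  by_contra hw
  have hpath : s(x, z) ∉ w.bypass.edges := fun h => hw (w.edges_bypass_subset_edges h)
  obtain ⟨φ, hφ⟩ := h𝒜.exists_forced_of_isPath w.bypass w.bypass_isPath hxz.ne False
  -- A trace on `s` that follows `φ` along the path and still contains the edge `xz`.
  obtain ⟨u, hu, htrace⟩ := hs (filter_subset (fun e => e = s(x, z) ∨ φ e) s)
  have hmem : ∀ e ∈ s, (e ∈ u ↔ e = s(x, z) ∨ φ e) := fun e he => by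
    simpa [he] using Finset.ext_iff.1 htrace e
  have hxz_mem : s(x, z) ∈ u := (hmem _ ((SimpleGraph.fromEdgeSet_adj _).1 hxz).1).2 (Or.inl rfl)
  refine (hφ u hu fun e he => ?_).1 hxz_mem
  have hes : e ∈ s := (SimpleGraph.edgeSet_fromEdgeSet (s : Set (Sym2 V)) ▸
    w.bypass.edges_subset_edgeSet he).1
  rw [hmem e hes, or_iff_right (ne_of_mem_of_not_mem he hpath)]

theorem card_edgeFinset_lt_of_isAcyclic [Fintype V] [Nonempty V] {G : SimpleGraph V}
    [Fintype G.edgeSet] (hG : G.IsAcyclic) : #G.edgeFinset < Fintype.card V := by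
  classical
  obtain ⟨T, hGT, -, hT⟩ :=
    SimpleGraph.connected_top.exists_isTree_le_of_le_of_isAcyclic le_top hG
  rw [← hT.card_edgeFinset, Nat.lt_succ_iff]
  exact card_le_card (SimpleGraph.edgeFinset_mono hGT)

theorem ForcesThirdEdge.card_le [Fintype V] [Nonempty V] {𝒜 : Finset (Finset (Sym2 V))}
    (h𝒜 : ForcesThirdEdge 𝒜) (hloop : ∀ u ∈ 𝒜, ∀ e ∈ u, ¬ e.IsDiag) :
    #𝒜 ≤ (Fintype.card (Sym2 V) + 1) ^ Fintype.card V := by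
  classical
  refine (card_le_pow_vcDim 𝒜).trans (Nat.pow_le_pow_right (Nat.succ_pos _) ?_)
  refine Finset.sup_le fun s hs => ?_
  rw [mem_shatterer] at hs
  obtain ⟨u, hu, hsu⟩ := hs.exists_superset
  have hedges : (SimpleGraph.fromEdgeSet (s : Set (Sym2 V))).edgeFinset = s := by
    ext e
    simpa using fun he => hloop u hu e (hsu he)
  exact hedges ▸ (card_edgeFinset_lt_of_isAcyclic (h𝒜.isAcyclic_of_shatters hs)).le

end ForcedEdges

section FreeTripleSystems

variable {V : Type*} [DecidableEq V]

theorem card_filter_subset_eq_card_filter_erase {r : ℕ} {G : Finset (Finset V)} {S : Finset V}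
    (hG : (G : Set (Finset V)).Sized r) (hS : #S = r + 1) :
    #{e ∈ G | e ⊆ S} = #{v ∈ S | S.erase v ∈ G} := by
  suffices {e ∈ G | e ⊆ S} = {v ∈ S | S.erase v ∈ G}.image S.erase by
    rw [this, card_image_of_injOn ((erase_injOn S).mono fun v hv => (mem_filter.1 hv).1)]
  ext e
  simp only [mem_filter, mem_image]
  constructor
  · rintro ⟨he, heS⟩
    obtain ⟨v, hv, rfl⟩ := exists_eq_insert_iff.2 ⟨heS, (hG he).symm ▸ hS.symm⟩
    exact ⟨v, by simpa [hv] using he, erase_insert hv⟩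
  · rintro ⟨v, ⟨-, he⟩, rfl⟩
    exact ⟨he, erase_subset v S⟩

theorem card_filter_subset_quadruple {G : Finset (Finset V)}
    (hG : (G : Set (Finset V)).Sized 3) {a b c d : V} (hab : a ≠ b) (hac : a ≠ c) (had : a ≠ d)
    (hbc : b ≠ c) (hbd : b ≠ d) (hcd : c ≠ d) :
    #{e ∈ G | e ⊆ {a, b, c, d}} =
      (if {a, b, c} ∈ G then 1 else 0) + (if {a, b, d} ∈ G then 1 else 0)
        + (if {a, c, d} ∈ G then 1 else 0) + (if {b, c, d} ∈ G then 1 else 0) := by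
  have ha : ({a, b, c, d} : Finset V).erase a = {b, c, d} := by grind
  have hb : ({a, b, c, d} : Finset V).erase b = {a, c, d} := by grind
  have hc : ({a, b, c, d} : Finset V).erase c = {a, b, d} := by grind
  have hd : ({a, b, c, d} : Finset V).erase d = {a, b, c} := by grind
  rw [card_filter_subset_eq_card_filter_erase hG
      (card_eq_four.2 ⟨a, b, c, d, hab, hac, had, hbc, hbd, hcd, rfl⟩), card_filter,
    sum_insert (by simp [*]), sum_insert (by simp [*]), sum_insert (by simp [*]), sum_singleton,
    ha, hb, hc, hd]
  ring

/-- The `({1, 4}, 4)`-free `3`-graphs on the vertex set `W`; the family counted by `numFree`, but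
over a vertex set that can grow one vertex at a time. -/
def freeTripleSystems (W : Finset V) : Finset (Finset (Finset V)) :=
  {G ∈ (W.powersetCard 3).powerset |
    ∀ S ∈ W.powersetCard 4, #{e ∈ G | e ⊆ S} ∉ ({1, 4} : Finset ℕ)}

theorem numFree_eq_card_freeTripleSystems (n : ℕ) :
    numFree n 3 4 {1, 4} = #(freeTripleSystems (univ : Finset (Fin n))) := by
  refine congrArg card ?_
  ext G
  simp only [rGraphs, IsLKFree, freeTripleSystems, mem_filter, mem_powersetCard, subset_univ,
    true_and]

theorem mem_freeTripleSystems {W : Finset V} {G : Finset (Finset V)} :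
    G ∈ freeTripleSystems W ↔ (∀ e ∈ G, e ⊆ W) ∧ (G : Set (Finset V)).Sized 3 ∧
      ∀ S ⊆ W, #S = 4 → #{e ∈ G | e ⊆ S} ∉ ({1, 4} : Finset ℕ) := by
  simp only [freeTripleSystems, mem_filter, mem_powerset, subset_iff (s₁ := G), mem_powersetCard,
    Set.Sized, mem_coe, and_imp, forall_and, and_assoc]

theorem freeTripleSystems_subset_powerset (W : Finset V) :
    freeTripleSystems W ⊆ (W.powersetCard 3).powerset :=
  filter_subset _ _

end FreeTripleSystems

section Links

variable {V : Type*} [DecidableEq V] {W : Finset V} {v : V} {G : Finset (Finset V)}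

theorem nonMemberSubfamily_mem_freeTripleSystems (hv : v ∉ W)
    (hG : G ∈ freeTripleSystems (insert v W)) :
    G.nonMemberSubfamily v ∈ freeTripleSystems W := by
  rw [mem_freeTripleSystems] at hG ⊢
  obtain ⟨hsub, hcard, hfree⟩ := hG
  refine ⟨fun e he => ?_, fun e he => hcard (mem_nonMemberSubfamily.1 he).1, fun S hS hS4 => ?_⟩
  · rw [mem_nonMemberSubfamily] at he
    exact (subset_insert_iff_of_notMem he.2).1 (hsub e he.1)
  · have heq : {e ∈ G.nonMemberSubfamily v | e ⊆ S} = {e ∈ G | e ⊆ S} := by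
      ext e
      simp only [mem_filter, mem_nonMemberSubfamily]
      exact ⟨fun h => ⟨h.1.1, h.2⟩, fun h => ⟨⟨h.1, fun hve => hv (hS (h.2 hve))⟩, h.2⟩⟩
    exact heq ▸ hfree S (hS.trans (subset_insert v W)) hS4

variable [Fintype V]

/-- The link graph of the vertex `v` in the `3`-graph `G`, given by its edge set. -/
def link (v : V) (G : Finset (Finset V)) : Finset (Sym2 V) := {e | insert v e.toFinset ∈ G}

theorem mem_link {v x y : V} {G : Finset (Finset V)} : s(x, y) ∈ link v G ↔ {v, x, y} ∈ G := by
  simp [link, Sym2.toFinset_mk_eq]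

theorem subset_of_link_eq {v : V} {G G' : Finset (Finset V)} (hG : (G : Set (Finset V)).Sized 3)
    (hlink : link v G = link v G') (hrest : G.nonMemberSubfamily v = G'.nonMemberSubfamily v) :
    G ⊆ G' := by
  intro e he
  by_cases hv : v ∈ e
  · have hcard : #(e.erase v) = 2 := by rw [card_erase_of_mem hv, hG he]
    obtain ⟨x, y, -, hxy⟩ := card_eq_two.1 hcard
    obtain rfl : e = {v, x, y} := by rw [← hxy, insert_erase hv]
    rwa [← mem_link, ← hlink, mem_link]
  · exact (mem_nonMemberSubfamily.1 (hrest ▸ mem_nonMemberSubfamily.2 ⟨he, hv⟩)).1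

theorem mem_of_mem_link (hG : G ∈ freeTripleSystems (insert v W)) {x y : V}
    (hxy : s(x, y) ∈ link v G) : x ∈ W ∧ y ∈ W ∧ x ≠ y := by
  rw [mem_link] at hxy
  obtain ⟨hsub, hcard, -⟩ := mem_freeTripleSystems.1 hG
  obtain ⟨hvx, hvy, hne⟩ : v ≠ x ∧ v ≠ y ∧ x ≠ y := by
    have := hcard hxy
    refine ⟨?_, ?_, ?_⟩ <;> rintro rfl <;> grind [card_le_two]
  have hx := hsub _ hxy (show x ∈ _ by simp)
  have hy := hsub _ hxy (show y ∈ _ by simp)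
  exact ⟨mem_of_mem_insert_of_ne hx hvx.symm, mem_of_mem_insert_of_ne hy hvy.symm, hne⟩

theorem sum_link_triangle_notMem (hv : v ∉ W) (hG : G ∈ freeTripleSystems (insert v W)) {x y z : V}
    (hx : x ∈ W) (hy : y ∈ W) (hz : z ∈ W) (hxy : x ≠ y) (hxz : x ≠ z) (hyz : y ≠ z) :
    (if s(x, y) ∈ link v G then 1 else 0) + (if s(x, z) ∈ link v G then 1 else 0)
      + (if s(y, z) ∈ link v G then 1 else 0)
      + (if {x, y, z} ∈ G.nonMemberSubfamily v then 1 else 0) ∉ ({1, 4} : Finset ℕ) := by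
  obtain ⟨-, hcard, hfree⟩ := mem_freeTripleSystems.1 hG
  have hvx : v ≠ x := (ne_of_mem_of_not_mem hx hv).symm
  have hvy : v ≠ y := (ne_of_mem_of_not_mem hy hv).symm
  have hvz : v ≠ z := (ne_of_mem_of_not_mem hz hv).symm
  have hxyz : {x, y, z} ∈ G.nonMemberSubfamily v ↔ {x, y, z} ∈ G := by
    simp [mem_nonMemberSubfamily, hvx, hvy, hvz]
  simp only [mem_link, hxyz]
  rw [← card_filter_subset_quadruple hcard hvx hvy hvz hxy hxz hyz]
  refine hfree _ (insert_subset_insert v ?_)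
    (card_eq_four.2 ⟨v, x, y, z, hvx, hvy, hvz, hxy, hxz, hyz, rfl⟩)
  simp [insert_subset_iff, hx, hy, hz]

theorem forcesThirdEdge_image_link (hv : v ∉ W) (H : Finset (Finset V)) :
    ForcesThirdEdge
      ({G ∈ freeTripleSystems (insert v W) | G.nonMemberSubfamily v = H}.image (link v)) := by
  intro x y z hxy hxz hyz β
  simp only [forall_mem_image, mem_filter, and_imp]
  by_cases hW : x ∈ W ∧ y ∈ W ∧ z ∈ W
  · obtain ⟨hx, hy, hz⟩ := hW
    by_cases hH : {x, y, z} ∈ H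
    -- One or two of the three sides lie in the link, so two equal sides force the third.
    · refine ⟨¬β, ¬β, fun G hG hGH hp hq => ?_⟩
      have hcount := sum_link_triangle_notMem hv hG hx hy hz hxy hxz hyz
      by_cases s(x, z) ∈ link v G <;> by_cases β <;> simp_all
    -- The number of sides in the link is not one, so `yz` absent makes `xy` and `xz` agree.
    · refine ⟨β, False, fun G hG hGH hp hq => ?_⟩
      have hcount := sum_link_triangle_notMem hv hG hx hy hz hxy hxz hyz
      by_cases s(x, z) ∈ link v G <;> by_cases β <;> simp_all
  · refine ⟨True, True, fun G hG _ hp hq => (hW ?_).elim⟩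
    have hxy := mem_of_mem_link hG (hp.2 trivial)
    exact ⟨hxy.1, hxy.2.1, (mem_of_mem_link hG (hq.2 trivial)).2.1⟩

theorem card_extensions_le (hv : v ∉ W) (H : Finset (Finset V)) :
    #{G ∈ freeTripleSystems (insert v W) | G.nonMemberSubfamily v = H}
      ≤ (Fintype.card (Sym2 V) + 1) ^ Fintype.card V := by
  have : Nonempty V := ⟨v⟩
  set F := {G ∈ freeTripleSystems (insert v W) | G.nonMemberSubfamily v = H} with hF
  have hinj : Set.InjOn (link v) F := by
    simp only [hF, coe_filter]
    rintro G ⟨hG, hGH⟩ G' ⟨hG', hGH'⟩ hlink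
    have hrest := hGH.trans hGH'.symm
    exact Subset.antisymm (subset_of_link_eq (mem_freeTripleSystems.1 hG).2.1 hlink hrest)
      (subset_of_link_eq (mem_freeTripleSystems.1 hG').2.1 hlink.symm hrest.symm)
  rw [← card_image_of_injOn hinj]
  refine (forcesThirdEdge_image_link hv H).card_le (forall_mem_image.2 fun G hG e he => ?_)
  induction e using Sym2.ind with
  | _ x y => exact (mem_of_mem_link (mem_filter.1 hG).1 he).2.2

theorem card_freeTripleSystems_le (W : Finset V) :
    #(freeTripleSystems W) ≤ ((Fintype.card (Sym2 V) + 1) ^ Fintype.card V) ^ #W := by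
  induction W using Finset.induction_on with
  | empty => exact (card_le_card (freeTripleSystems_subset_powerset ∅)).trans (by simp)
  | insert v W hv ih =>
    rw [card_insert_of_notMem hv, pow_succ']
    exact (card_le_mul_card_image_of_maps_to
      (fun G hG => nonMemberSubfamily_mem_freeTripleSystems hv hG) _
      fun H _ => card_extensions_le hv H).trans (Nat.mul_le_mul_left _ ih)

end Links

theorem numFree_le_pow {n : ℕ} (hn : 2 ≤ n) : numFree n 3 4 {1, 4} ≤ n ^ (2 * n ^ 2) := by
  have hpairs : (n + 1).choose 2 + 1 ≤ n ^ 2 := by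
    rw [Nat.choose_two_right, Nat.add_sub_cancel]
    have := Nat.div_mul_le_self ((n + 1) * n) 2
    nlinarith
  calc numFree n 3 4 {1, 4} ≤ (((n + 1).choose 2 + 1) ^ n) ^ n := by
        simpa [numFree_eq_card_freeTripleSystems, Sym2.card] using
          card_freeTripleSystems_le (univ : Finset (Fin n))
    _ ≤ ((n ^ 2) ^ n) ^ n := by gcongr
    _ = n ^ (2 * n ^ 2) := by ring

section GreedyColoring

variable {V α : Type*} [Fintype V] [Fintype α]

open Classical in
/-- The functions that colour `G` properly on `s` and take the dummy value `c₀` elsewhere: the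
states of a greedy colouring that has reached the vertices of `s`. -/
noncomputable def coloringsOn (G : SimpleGraph V) (c₀ : α) (s : Finset V) : Finset (V → α) :=
  {f | (∀ v ∈ s, ∀ w ∈ s, G.Adj v w → f v ≠ f w) ∧ ∀ v ∉ s, f v = c₀}

variable {G : SimpleGraph V} {c₀ : α} {s : Finset V} {v : V}

theorem mem_coloringsOn {f : V → α} : f ∈ coloringsOn G c₀ s ↔
    (∀ v ∈ s, ∀ w ∈ s, G.Adj v w → f v ≠ f w) ∧ ∀ v ∉ s, f v = c₀ := by
  simp [coloringsOn]

section Update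

variable [DecidableEq V] {f : V → α}

theorem update_mem_coloringsOn_insert (hf : f ∈ coloringsOn G c₀ s) {c : α}
    (hc : ∀ w, G.Adj v w → f w ≠ c) :
    Function.update f v c ∈ coloringsOn G c₀ (insert v s) := by
  rw [mem_coloringsOn] at hf ⊢
  refine ⟨fun x hx y hy hxy => ?_, fun x hx => ?_⟩
  · have := hxy.ne
    have := hxy.symm
    grind [Function.update_apply]
  · grind [Function.update_apply]

theorem update_mem_coloringsOn (hv : v ∉ s) (hf : f ∈ coloringsOn G c₀ (insert v s)) :
    Function.update f v c₀ ∈ coloringsOn G c₀ s := by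
  rw [mem_coloringsOn] at hf ⊢
  grind [Function.update_apply]

theorem card_sub_degree_mul_card_coloringsOn_le [Fintype (G.neighborSet v)] (hv : v ∉ s) :
    (Fintype.card α - G.degree v) * #(coloringsOn G c₀ s) ≤ #(coloringsOn G c₀ (insert v s)) := by
  classical
  refine mul_card_image_le_card_of_maps_to (f := fun f => Function.update f v c₀)
    (fun f hf => update_mem_coloringsOn hv hf) _ fun f hf => ?_
  have hfv : f v = c₀ := (mem_coloringsOn.1 hf).2 v hv
  calc Fintype.card α - G.degree v ≤ #((G.neighborFinset v).image f)ᶜ := by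
        rw [card_compl]
        exact Nat.sub_le_sub_left card_image_le _
    _ = #(((G.neighborFinset v).image f)ᶜ.image (Function.update f v)) :=
        (card_image_of_injective _ (Function.update_injective f v)).symm
    _ ≤ _ := by
        refine card_le_card (image_subset_iff.2 fun c hc => mem_filter.2 ⟨?_, ?_⟩)
        · refine update_mem_coloringsOn_insert hf fun w hw hfw => mem_compl.1 hc ?_
          exact mem_image.2 ⟨w, (G.mem_neighborFinset v w).2 hw, hfw⟩
        · rw [Function.update_idem, ← hfv, Function.update_eq_self]

end Update

theorem pow_le_card_coloring [Nonempty α] [G.LocallyFinite] {Δ : ℕ} (hΔ : ∀ v, G.degree v ≤ Δ) :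
    (Fintype.card α - Δ) ^ Fintype.card V ≤ Nat.card (G.Coloring α) := by
  classical
  obtain ⟨c₀⟩ := ‹Nonempty α›
  have hgreedy (s : Finset V) : (Fintype.card α - Δ) ^ #s ≤ #(coloringsOn G c₀ s) := by
    induction s using Finset.induction_on with
    | empty => exact card_pos.2 ⟨fun _ => c₀, by simp [mem_coloringsOn]⟩
    | insert v s hv ih =>
      rw [card_insert_of_notMem hv, pow_succ']
      exact (Nat.mul_le_mul (Nat.sub_le_sub_left (hΔ v) _) ih).trans
        (card_sub_degree_mul_card_coloringsOn_le hv)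
  have : Finite (G.Coloring α) := DFunLike.finite _
  calc (Fintype.card α - Δ) ^ Fintype.card V ≤ Nat.card (coloringsOn G c₀ univ) := by
        simpa using hgreedy univ
    _ ≤ Nat.card (G.Coloring α) :=
        Nat.card_le_card_of_injective
          (fun f => .mk f.1 fun h => (mem_coloringsOn.1 f.2).1 _ (mem_univ _) _ (mem_univ _) h)
          fun f f' h => Subtype.ext (congrArg DFunLike.coe h)

end GreedyColoring

section LinearSystems

variable {V : Type*} [DecidableEq V]

/-- `M` is the edge set of a linear hypergraph: two distinct edges share at most one vertex. -/
def IsLinear (M : Finset (Finset V)) : Prop :=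
  (M : Set (Finset V)).Pairwise fun e f => #(e ∩ f) ≤ 1

theorem IsLinear.card_filter_subset_le_one {M : Finset (Finset V)} (hM : IsLinear M) {r : ℕ}
    (hMr : (M : Set (Finset V)).Sized r) {S : Finset V} (hS : #S + 1 < 2 * r) :
    #{e ∈ M | e ⊆ S} ≤ 1 := by
  rw [card_le_one]
  intro e he f hf
  rw [mem_filter] at he hf
  by_contra hef
  have hinter := hM he.1 hf.1 hef
  have hunion := card_le_card (union_subset he.2 hf.2)
  have := card_union_add_card_inter e f
  have := hMr he.1
  have := hMr hf.1
  omega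

end LinearSystems

section ColoredTriples

variable {V : Type*} [Fintype V] {col : V → ZMod 3}

/-- The triples meeting all three colour classes. -/
def rainbowTriples (col : V → ZMod 3) : Finset (Finset V) :=
  {e ∈ powersetCard 3 univ | e.image col = univ}

/-- The rainbow triples and the triples with two vertices in one colour class and the third in the
next: the latter are exactly the triples of colour sum `1`. -/
def baseTriples (col : V → ZMod 3) : Finset (Finset V) :=
  {e ∈ powersetCard 3 univ | ∑ v ∈ e, col v = 1 ∨ e.image col = univ}

theorem sized_rainbowTriples : (rainbowTriples col : Set (Finset V)).Sized 3 :=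
  subset_powersetCard_univ_iff.1 (filter_subset _ _)

theorem rainbowTriples_subset_baseTriples : rainbowTriples col ⊆ baseTriples col :=
  monotone_filter_right _ fun _ _ => Or.inr

theorem sized_baseTriples : (baseTriples col : Set (Finset V)).Sized 3 :=
  subset_powersetCard_univ_iff.1 (filter_subset _ _)

variable [DecidableEq V]

theorem triple_mem_baseTriples {a b c : V} (hab : a ≠ b) (hac : a ≠ c) (hbc : b ≠ c) :
    {a, b, c} ∈ baseTriples col ↔
      col a + (col b + col c) = 1 ∨ ({col a, col b, col c} : Finset (ZMod 3)) = univ := by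
  simp [baseTriples, card_eq_three.2 ⟨a, b, c, hab, hac, hbc, rfl⟩, sum_insert, hab, hac, hbc]

theorem card_baseTriples_filter_subset_mem {S : Finset V} (hS : #S = 4) :
    #{e ∈ baseTriples col | e ⊆ S} ∈ ({0, 2, 3} : Finset ℕ) := by
  obtain ⟨a, b, c, d, hab, hac, had, hbc, hbd, hcd, rfl⟩ := card_eq_four.1 hS
  rw [card_filter_subset_quadruple sized_baseTriples hab hac had hbc hbd hcd]
  simp only [triple_mem_baseTriples, ne_eq, *, not_false_eq_true]
  -- With `t` vertices of one colour and `4 - t` of the next, the count is `t.choose 2 * (4 - t)`;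
  -- with all three colours, one of them repeated, there are two rainbow triples and one of sum `1`.
  generalize col a = i, col b = j, col c = k, col d = l
  revert i j k l
  decide

theorem card_baseTriples_filter_subset_of_rainbow {S e : Finset V} (hS : #S = 4) (he : #e = 3)
    (heS : e ⊆ S) (hcol : e.image col = univ) : #{e ∈ baseTriples col | e ⊆ S} = 3 := by
  obtain ⟨a, ha, rfl⟩ := exists_eq_insert_iff.2 ⟨heS, he.symm ▸ hS.symm⟩
  obtain ⟨b, c, d, hbc, hbd, hcd, rfl⟩ := card_eq_three.1 he
  simp only [mem_insert, mem_singleton, not_or] at ha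
  obtain ⟨hab, hac, had⟩ := ha
  rw [card_filter_subset_quadruple sized_baseTriples hab hac had hbc hbd hcd]
  simp only [triple_mem_baseTriples, ne_eq, *, not_false_eq_true]
  simp only [image_insert, image_singleton] at hcol
  generalize col a = i, col b = j, col c = k, col d = l at *
  clear * - hcol
  revert i j k l
  decide

theorem baseTriples_sdiff_mem_freeTripleSystems {M : Finset (Finset V)}
    (hrainbow : M ⊆ rainbowTriples col) (hM : IsLinear M) :
    baseTriples col \ M ∈ freeTripleSystems univ := by
  have hMB : M ⊆ baseTriples col := hrainbow.trans rainbowTriples_subset_baseTriples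
  refine mem_freeTripleSystems.2 ⟨fun _ _ => subset_univ _,
    fun e he => sized_baseTriples (mem_sdiff.1 he).1, fun S _ hS => ?_⟩
  have hcount : #{e ∈ baseTriples col \ M | e ⊆ S} =
      #{e ∈ baseTriples col | e ⊆ S} - #{e ∈ M | e ⊆ S} := by
    rw [← card_sdiff_of_subset (filter_subset_filter _ hMB)]
    congr 1
    grind
  have hle : #{e ∈ M | e ⊆ S} ≤ 1 :=
    hM.card_filter_subset_le_one (sized_rainbowTriples.mono hrainbow) (by omega)
  obtain hzero | hpos := Nat.eq_zero_or_pos #{e ∈ M | e ⊆ S}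
  · have hbase := card_baseTriples_filter_subset_mem (col := col) hS
    rw [hcount, hzero, Nat.sub_zero]
    simp only [mem_insert, mem_singleton] at hbase ⊢
    omega
  · obtain ⟨e, he⟩ := card_pos.1 hpos
    obtain ⟨heM, heS⟩ := mem_filter.1 he
    obtain ⟨he3, hecol⟩ := mem_filter.1 (hrainbow heM)
    rw [hcount, card_baseTriples_filter_subset_of_rainbow hS (mem_powersetCard.1 he3).2 heS hecol]
    have hone : #{e ∈ M | e ⊆ S} = 1 := by omega
    simp [hone]

end ColoredTriples

section ArrayPlacement

variable {V : Type*} {col : V → ZMod 3}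

/-- An injective placement of the rows, columns and symbols of an array in the colour classes `0`,
`1` and `2`, so that its cells become rainbow triples. -/
structure ArrayPlacement (col : V → ZMod 3) (I J L : Type*) where
  row : I ↪ V
  column : J ↪ V
  symbol : L ↪ V
  col_row (i : I) : col (row i) = 0
  col_column (j : J) : col (column j) = 1
  col_symbol (l : L) : col (symbol l) = 2

namespace ArrayPlacement

variable {I J L : Type*} {P : ArrayPlacement col I J L} {i : I} {j : J} {l : L} {p : I × J}

theorem row_ne_column : P.row i ≠ P.column j :=
  ne_of_apply_ne col (by rw [P.col_row, P.col_column]; decide)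

theorem row_ne_symbol : P.row i ≠ P.symbol l :=
  ne_of_apply_ne col (by rw [P.col_row, P.col_symbol]; decide)

theorem column_ne_symbol : P.column j ≠ P.symbol l :=
  ne_of_apply_ne col (by rw [P.col_column, P.col_symbol]; decide)

variable [DecidableEq V]

variable (P) in
/-- The rainbow triple of the array cell in row `p.1` and column `p.2` with entry `l`. -/
def cell (p : I × J) (l : L) : Finset V := {P.row p.1, P.column p.2, P.symbol l}

theorem row_mem_cell : P.row i ∈ P.cell p l ↔ i = p.1 := by
  simp [cell, row_ne_column, row_ne_symbol]

theorem column_mem_cell : P.column j ∈ P.cell p l ↔ j = p.2 := by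
  simp [cell, row_ne_column.symm, column_ne_symbol]

theorem symbol_mem_cell {l' : L} : P.symbol l' ∈ P.cell p l ↔ l' = l := by
  simp [cell, row_ne_symbol.symm, column_ne_symbol.symm]

theorem cell_inj {q : I × J} {l' : L} : P.cell p l = P.cell q l' ↔ p = q ∧ l = l' := by
  refine ⟨fun h => ⟨Prod.ext ?_ ?_, ?_⟩, fun ⟨hpq, hl⟩ => hpq ▸ hl ▸ rfl⟩
  · exact row_mem_cell.1 (h ▸ row_mem_cell.2 rfl)
  · exact column_mem_cell.1 (h ▸ column_mem_cell.2 rfl)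
  · exact symbol_mem_cell.1 (h ▸ symbol_mem_cell.2 rfl)

theorem cell_mem_rainbowTriples [Fintype V] : P.cell p l ∈ rainbowTriples col := by
  refine mem_filter.2 ⟨mem_powersetCard_univ.2 ?_, ?_⟩
  · exact card_eq_three.2 ⟨_, _, _, row_ne_column, row_ne_symbol, column_ne_symbol, rfl⟩
  · simp only [cell, image_insert, image_singleton, P.col_row, P.col_column, P.col_symbol]
    decide

section Entries

variable [Fintype I] [Fintype J]

variable (P) in
/-- The triple system of all the cells of the array with entries `g`. -/
def arrayTriples (g : I × J → L) : Finset (Finset V) := univ.image fun p => P.cell p (g p)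

theorem arrayTriples_subset_rainbowTriples [Fintype V] {g : I × J → L} :
    P.arrayTriples g ⊆ rainbowTriples col :=
  image_subset_iff.2 fun _ _ => cell_mem_rainbowTriples

theorem arrayTriples_injective : Function.Injective P.arrayTriples := by
  intro g g' h
  funext p
  have hp : P.cell p (g p) ∈ P.arrayTriples g' := h ▸ mem_image_of_mem _ (mem_univ p)
  obtain ⟨q, -, hq⟩ := mem_image.1 hp
  obtain ⟨rfl, hl⟩ := cell_inj.1 hq
  exact hl.symm

theorem isLinear_arrayTriples
    (C : ((⊤ : SimpleGraph I) □ (⊤ : SimpleGraph J)).Coloring L) :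
    IsLinear (P.arrayTriples C) := by
  simp only [IsLinear, arrayTriples, coe_image, coe_univ, Set.image_univ]
  rintro _ ⟨p, rfl⟩ _ ⟨q, rfl⟩ hpq
  have hne : p ≠ q := ne_of_apply_ne (fun p => P.cell p (C p)) hpq
  have hrow : p.1 = q.1 → C p ≠ C q := fun h =>
    C.valid (SimpleGraph.boxProd_adj.2 (.inr ⟨fun h' => hne (Prod.ext h h'), h⟩))
  have hcolumn : p.2 = q.2 → C p ≠ C q := fun h =>
    C.valid (SimpleGraph.boxProd_adj.2 (.inl ⟨fun h' => hne (Prod.ext h' h), h⟩))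
  have hcell : p.1 = q.1 → p.2 ≠ q.2 := fun h h' => hne (Prod.ext h h')
  rw [card_le_one]
  simp only [mem_inter, and_imp]
  intro u hu hu' w hw hw'
  simp only [cell.eq_def _ p, mem_insert, mem_singleton] at hu hw
  obtain rfl | rfl | rfl := hu <;> obtain rfl | rfl | rfl := hw <;>
    simp only [row_mem_cell, column_mem_cell, symbol_mem_cell] at hu' hw' <;> tauto

end Entries

theorem card_coloring_le_card_freeTripleSystems [Fintype V] [Finite I] [Finite J]
    (P : ArrayPlacement col I J L) :
    Nat.card (((⊤ : SimpleGraph I) □ (⊤ : SimpleGraph J)).Coloring L) ≤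
      #(freeTripleSystems (univ : Finset V)) := by
  cases nonempty_fintype I
  cases nonempty_fintype J
  have hsub (g : I × J → L) : P.arrayTriples g ⊆ baseTriples col :=
    arrayTriples_subset_rainbowTriples.trans rainbowTriples_subset_baseTriples
  rw [← Nat.card_eq_finsetCard]
  refine Nat.card_le_card_of_injective
    (fun C => ⟨baseTriples col \ P.arrayTriples C, baseTriples_sdiff_mem_freeTripleSystems
      arrayTriples_subset_rainbowTriples (isLinear_arrayTriples C)⟩) fun C C' h => ?_
  refine DFunLike.coe_injective (P.arrayTriples_injective ?_)
  rw [← Finset.sdiff_sdiff_eq_self (hsub C), ← Finset.sdiff_sdiff_eq_self (hsub C')]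
  exact congrArg (baseTriples col \ ·) (Subtype.ext_iff.1 h)

end ArrayPlacement

end ArrayPlacement

/-- The embedding of `Fin m` into the residue class of `r` modulo `3` in `Fin n`. -/
def residueEmbedding {m n : ℕ} (h : 3 * m ≤ n) (r : Fin 3) : Fin m ↪ Fin n where
  toFun i := ⟨3 * i + r, by omega⟩
  inj' i i' h := by simpa [Fin.ext_iff] using h

theorem cast_residueEmbedding {m n : ℕ} (h : 3 * m ≤ n) (r : Fin 3) (i : Fin m) :
    ((residueEmbedding h r i : ℕ) : ZMod 3) = (r : ℕ) := by
  change ((3 * i + r : ℕ) : ZMod 3) = (r : ℕ)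
  have h3 : (3 : ZMod 3) = 0 := rfl
  push_cast
  rw [h3, zero_mul, zero_add]

/-- A `k × k` array with `3 * k` symbols, placed in `Fin n` coloured by residues modulo `3`. -/
def finArrayPlacement {k n : ℕ} (h : 9 * k ≤ n) :
    ArrayPlacement (fun v : Fin n => ((v : ℕ) : ZMod 3)) (Fin k) (Fin k) (Fin (3 * k)) where
  row := residueEmbedding (by omega) 0
  column := residueEmbedding (by omega) 1
  symbol := residueEmbedding (by omega) 2
  col_row := cast_residueEmbedding _ 0
  col_column := cast_residueEmbedding _ 1
  col_symbol := cast_residueEmbedding _ 2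

theorem pow_le_numFree {k n : ℕ} (hk : 0 < k) (h : 9 * k ≤ n) :
    k ^ (k ^ 2) ≤ numFree n 3 4 {1, 4} := by
  have : Nonempty (Fin (3 * k)) := ⟨⟨0, by omega⟩⟩
  let R := (⊤ : SimpleGraph (Fin k)) □ (⊤ : SimpleGraph (Fin k))
  have hdegree (p : Fin k × Fin k) : R.degree p ≤ 2 * k := by
    simp only [R, SimpleGraph.degree_boxProd, SimpleGraph.complete_graph_degree, Fintype.card_fin]
    omega
  calc k ^ (k ^ 2) = (3 * k - 2 * k) ^ (k * k) := by
        rw [← sq, show 3 * k - 2 * k = k by omega]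
    _ ≤ Nat.card (R.Coloring (Fin (3 * k))) := by
        simpa using pow_le_card_coloring (α := Fin (3 * k)) hdegree
    _ ≤ #(freeTripleSystems (univ : Finset (Fin n))) :=
        (finArrayPlacement h).card_coloring_le_card_freeTripleSystems
    _ = numFree n 3 4 {1, 4} := (numFree_eq_card_freeTripleSystems n).symm

theorem rpow_mul_logb {b x : ℝ} (hb : 0 < b) (hb1 : b ≠ 1) (hx : 0 < x) (t : ℝ) :
    b ^ (t * Real.logb b x) = x ^ t := by
  rw [mul_comm, Real.rpow_mul hb.le, Real.rpow_logb hb hb1 hx]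

/-- The constant comes from `n ≤ 18 * (n / 9)` and `n ≤ (n / 9) ^ 2`. -/
theorem rpow_le_numFree {n : ℕ} (hn : 324 ≤ n) :
    (n : ℝ) ^ (1 / 648 * (n : ℝ) ^ 2) ≤ numFree n 3 4 {1, 4} := by
  obtain ⟨k, hk, hkn, hnk⟩ : ∃ k, 18 ≤ k ∧ 9 * k ≤ n ∧ n ≤ 18 * k := ⟨n / 9, by omega⟩
  have hn1 : (1 : ℝ) ≤ n := by exact_mod_cast (show 1 ≤ n by omega)
  have hexp : 1 / 648 * (n : ℝ) ^ 2 ≤ (k : ℝ) ^ 2 / 2 := by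
    have : (n : ℝ) ≤ 18 * k := by exact_mod_cast hnk
    nlinarith
  have hbase : (n : ℝ) ≤ (k : ℝ) ^ 2 := by exact_mod_cast hnk.trans (by nlinarith)
  calc (n : ℝ) ^ (1 / 648 * (n : ℝ) ^ 2) ≤ (n : ℝ) ^ ((k : ℝ) ^ 2 / 2) :=
        Real.rpow_le_rpow_of_exponent_le hn1 hexp
    _ ≤ ((k : ℝ) ^ 2) ^ ((k : ℝ) ^ 2 / 2) := by gcongr
    _ = (k : ℝ) ^ ((k ^ 2 : ℕ) : ℝ) := by
        rw [← Real.rpow_natCast_mul k.cast_nonneg]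
        push_cast
        ring_nf
    _ ≤ numFree n 3 4 {1, 4} := by exact_mod_cast pow_le_numFree (by omega) hkn

/-- Theorem: the number of `({1,4},4)`-free (equivalently, induced `{K₄³, E₁}`-free)
3-graphs on `[n]` is `2^(Θ(n² log₂ n))`. -/
theorem count_K43_E1_free :
    ∃ c C : ℝ, 0 < c ∧ 0 < C ∧ ∃ n₀ : ℕ, ∀ n : ℕ, n₀ ≤ n →
      (2 : ℝ) ^ (c * (n : ℝ) ^ 2 * Real.logb 2 n) ≤ (numFree n 3 4 {1, 4} : ℝ) ∧
      (numFree n 3 4 {1, 4} : ℝ) ≤ (2 : ℝ) ^ (C * (n : ℝ) ^ 2 * Real.logb 2 n) := by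
  refine ⟨1 / 648, 2, by norm_num, zero_lt_two, 324, fun n hn => ?_⟩
  have hn0 : (0 : ℝ) < n := by exact_mod_cast (show 0 < n by omega)
  simp only [rpow_mul_logb zero_lt_two (OfNat.ofNat_ne_one 2) hn0]
  refine ⟨rpow_le_numFree hn, ?_⟩
  have hupper : (numFree n 3 4 {1, 4} : ℝ) ≤ (n : ℝ) ^ (2 * n ^ 2) := by
    exact_mod_cast numFree_le_pow (show 2 ≤ n by omega)
  exact_mod_cast hupper
end
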